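/- Let s be a period of length P (a finite sequence of positive integers that is not the concatenation of several copies of a shorter block). Then the primitive class determined by s is unique if and only if P is odd; precisely: (a) if P is odd, then any two primitive integer binary quadratic forms f, g of positive nonsquare discriminant with Γ(f) and Γ(g) both equal to s up to cyclic permutation are SL(2,ℤ)-equivalent; (b) if P is even, there exist two primitive forms f, g of positive nonsquare discriminant, not SL(2,ℤ)-equivalent to each other, with Γ(f) and Γ(g) both equal to s up to cyclic permutation. -/

import Mathlib

/-- Iterates of the Gauss map starting from `ξ`. -/
noncomputable def gaussIter (ξ : ℝ) : ℕ → ℝ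
  | 0 => ξ
  | n + 1 => 1 / (gaussIter ξ n - (⌊gaussIter ξ n⌋ : ℝ))

/-- The `n`-th partial quotient of the regular continued fraction expansion of `ξ`. -/
noncomputable def cfTerm (ξ : ℝ) (n : ℕ) : ℤ := ⌊gaussIter ξ n⌋

/-- The continued fraction expansion of `ξ` is periodic with period length `P` from index `N`. -/
def IsEventuallyPeriodicCF (ξ : ℝ) (N P : ℕ) : Prop :=
  1 ≤ P ∧ ∀ j : ℕ, cfTerm ξ (N + j + P) = cfTerm ξ (N + j)

/-- `s` is the (minimal) period of the eventually periodic regular continued fraction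
expansion of `ξ`; it is well defined up to cyclic permutation. -/
def IsCFPeriod (s : List ℤ) (ξ : ℝ) : Prop :=
  s ≠ [] ∧
  (∃ N : ℕ, ∀ j : ℕ, cfTerm ξ (N + j) = s.getD (j % s.length) 0) ∧
  (∀ P : ℕ, 1 ≤ P → (∃ N : ℕ, IsEventuallyPeriodicCF ξ N P) → s.length ≤ P)

/-- The value of the binary quadratic form `f = (m, n, k)`, i.e. `m*x^2 + n*y^2 + k*x*y`. -/
def qval (f : ℤ × ℤ × ℤ) (x y : ℤ) : ℤ := f.1 * x ^ 2 + f.2.1 * y ^ 2 + f.2.2 * x * y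

/-- The discriminant `k^2 - 4*m*n` of the form `f = (m, n, k)`. -/
def formDisc (f : ℤ × ℤ × ℤ) : ℤ := f.2.2 ^ 2 - 4 * f.1 * f.2.1

/-- `SL(2,ℤ)`-equivalence of binary quadratic forms. -/
def SLEquiv (f g : ℤ × ℤ × ℤ) : Prop :=
  ∃ a b c d : ℤ, a * d - b * c = 1 ∧
    ∀ x y : ℤ, qval g x y = qval f (a * x + b * y) (c * x + d * y)

/-- The root with the plus sign of `m*ξ^2 + k*ξ + n = 0`, for `f = (m, n, k)`. -/
noncomputable def xiPlus (f : ℤ × ℤ × ℤ) : ℝ :=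
  (-(f.2.2 : ℝ) + Real.sqrt ((formDisc f : ℤ) : ℝ)) / (2 * (f.1 : ℝ))

/-- The root with the minus sign of `m*ξ^2 + k*ξ + n = 0`, for `f = (m, n, k)`. -/
noncomputable def xiMinus (f : ℤ × ℤ × ℤ) : ℝ :=
  (-(f.2.2 : ℝ) - Real.sqrt ((formDisc f : ℤ) : ℝ)) / (2 * (f.1 : ℝ))

/-- The conjugate `(m, n, -k)` of the form `(m, n, k)`. -/
def conjF (f : ℤ × ℤ × ℤ) : ℤ × ℤ × ℤ := (f.1, f.2.1, -f.2.2)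

/-- The adjoint `(-n, -m, k)` of the form `(m, n, k)`. -/
def adjF (f : ℤ × ℤ × ℤ) : ℤ × ℤ × ℤ := (-f.2.1, -f.1, f.2.2)

/-- The antipodal `(-n, -m, -k)` of the form `(m, n, k)`. -/
def antipF (f : ℤ × ℤ × ℤ) : ℤ × ℤ × ℤ := (-f.2.1, -f.1, -f.2.2)

/-- A form `(m, n, k)` is primitive if `gcd(m, n, k) = 1`. -/
def IsPrimitiveForm (f : ℤ × ℤ × ℤ) : Prop := Int.gcd f.1 (Int.gcd f.2.1 f.2.2) = 1

/-- A period: a nonempty finite sequence of positive integers which is not the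
concatenation of several copies of a shorter block. -/
def IsPeriodWord (s : List ℤ) : Prop :=
  s ≠ [] ∧ (∀ a ∈ s, 0 < a) ∧
  ∀ (t : List ℤ) (j : ℕ), 2 ≤ j → s ≠ (List.replicate j t).flatten

/-!
Dropping one partial quotient from `ξ⁺(f)` is a translation followed by the inversion `ξ ↦ ξ⁻¹`; on
forms the former is an element of `SL(2, ℤ)`, while the latter is the antipode
`(m, n, k) ↦ (-n, -m, -k)`, an involution that respects equivalence. Conversely the generators
`ξ ↦ ξ + 1` and `ξ ↦ -ξ⁻¹` of `SL(2, ℤ)` preserve the tail of a continued fraction together with the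
parity of the position at which it starts. Since a primitive form is determined by `ξ⁺`, two
primitive forms are equivalent if and only if their continued fractions agree after dropping `N` and
`M` partial quotients with `N + M` even.

If the period has odd length, the parity of `N + M` can be corrected by dropping one more period. If
it has even length, a form `f` with this period, obtained from the fixed point of the Möbius
transformation `x ↦ a₁ + 1/(a₂ + ⋯ + 1/(aₙ + 1/x))`, is not equivalent to its antipode: otherwise
`ξ⁺(f)` would agree with itself after dropping `N` and `M` partial quotients with `N + M` odd, and
the odd number `|N - M|` would be a multiple of the period length.
-/

open Function Matrix
open scoped MatrixGroups

/-! ### Partial quotients -/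

theorem gaussIter_gaussIter (x : ℝ) (N j : ℕ) :
    gaussIter (gaussIter x N) j = gaussIter x (N + j) := by
  induction j with
  | zero => rfl
  | succ j ih => rw [← add_assoc, gaussIter, gaussIter, ih]

theorem cfTerm_gaussIter (x : ℝ) (N j : ℕ) : cfTerm (gaussIter x N) j = cfTerm x (N + j) := by
  rw [cfTerm, cfTerm, gaussIter_gaussIter]

theorem gaussIter_one (x : ℝ) : gaussIter x 1 = (Int.fract x)⁻¹ := one_div _

theorem cfTerm_succ (x : ℝ) (n : ℕ) : cfTerm x (n + 1) = cfTerm (Int.fract x)⁻¹ n := by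
  rw [← gaussIter_one, cfTerm_gaussIter, add_comm]

theorem one_le_floor_inv_fract {x : ℝ} (hx : Int.fract x ≠ 0) : 1 ≤ ⌊(Int.fract x)⁻¹⌋ := by
  have hpos : 0 < Int.fract x := (Int.fract_nonneg x).lt_of_ne' hx
  exact Int.le_floor.mpr (by simpa using (one_lt_inv₀ hpos).mpr (Int.fract_lt_one x) |>.le)

/-- The Gauss map sends an integer to `1 / 0 = 0`, so a vanishing partial quotient of positive index
marks the end of the expansion. -/
theorem genContFract_of_get?_eq_cfTerm (x : ℝ) (n : ℕ) :
    (GenContFract.of x).s.get? n =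
      if cfTerm x (n + 1) = 0 then none else some ⟨1, (cfTerm x (n + 1) : ℝ)⟩ := by
  induction n generalizing x with
  | zero =>
    have hterm : cfTerm x 1 = ⌊(Int.fract x)⁻¹⌋ := cfTerm_succ x 0
    by_cases hx : Int.fract x = 0
    · obtain ⟨a, rfl⟩ := Int.fract_eq_zero_iff.mp hx
      simp [hterm, GenContFract.of_s_of_int]
    · have hne : cfTerm x 1 ≠ 0 := by have := one_le_floor_inv_fract hx; omega
      rw [zero_add, if_neg hne, hterm]
      exact GenContFract.of_s_head hx
  | succ n ih => rw [GenContFract.of_s_succ, ih, ← cfTerm_succ]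

theorem cfTerm_injective : Injective cfTerm := by
  intro x y h
  have hof : GenContFract.of x = GenContFract.of y := by
    rw [GenContFract.mk.injEq]
    refine ⟨?_, Stream'.Seq.ext fun n ↦ ?_⟩
    · rw [GenContFract.of_h_eq_floor, GenContFract.of_h_eq_floor]
      exact congrArg ((↑) : ℤ → ℝ) (congrFun h 0)
    · rw [genContFract_of_get?_eq_cfTerm, genContFract_of_get?_eq_cfTerm, h]
  exact tendsto_nhds_unique (GenContFract.of_convergence x) (hof ▸ GenContFract.of_convergence y)

theorem gaussIter_eq_of_cfTerm_eq {x y : ℝ} {N M : ℕ}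
    (h : ∀ j, cfTerm x (N + j) = cfTerm y (M + j)) : gaussIter x N = gaussIter y M :=
  cfTerm_injective <| funext fun j ↦ by rw [cfTerm_gaussIter, cfTerm_gaussIter, h]

/-! ### Common tails -/

/-- The continued fractions of `x` and `y` have a common tail, and the numbers of partial quotients
dropped from `x` and from `y` add up to `ε` modulo `2`. -/
def TailEquiv (ε : ZMod 2) (x y : ℝ) : Prop :=
  ∃ N M : ℕ, ((N + M : ℕ) : ZMod 2) = ε ∧ gaussIter x N = gaussIter y M

namespace TailEquiv

variable {ε δ : ZMod 2} {x y z : ℝ}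

theorem refl (x : ℝ) : TailEquiv 0 x x := ⟨0, 0, by simp, rfl⟩

theorem symm : TailEquiv ε x y → TailEquiv ε y x :=
  fun ⟨N, M, hε, h⟩ ↦ ⟨M, N, by rw [add_comm, hε], h.symm⟩

theorem trans : TailEquiv ε x y → TailEquiv δ y z → TailEquiv (ε + δ) x z := by
  rintro ⟨N, M, rfl, hxy⟩ ⟨N', M', rfl, hyz⟩
  refine ⟨N + N', M' + M, by push_cast; ring, ?_⟩
  rw [← gaussIter_gaussIter x, hxy, gaussIter_gaussIter, add_comm M, ← gaussIter_gaussIter y, hyz,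
    gaussIter_gaussIter]

theorem gaussIter_right (x : ℝ) (n : ℕ) : TailEquiv n x (gaussIter x n) := ⟨n, 0, by simp, rfl⟩

theorem add_intCast (x : ℝ) (a : ℤ) : TailEquiv 0 (x + a) x :=
  ⟨1, 1, by decide, by rw [gaussIter_one, gaussIter_one, Int.fract_add_intCast]⟩

theorem neg_of_fract_lt_half (h0 : 0 < Int.fract x) (h1 : Int.fract x < 1 / 2) :
    TailEquiv 1 (-x) x := by
  have hneg : gaussIter (-x) 1 = (1 - Int.fract x)⁻¹ := by
    rw [gaussIter_one, Int.fract_neg h0.ne']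
  have hneg2 : gaussIter (-x) 2 = gaussIter x 1 + ((-1 : ℤ) : ℝ) := by
    rw [← gaussIter_gaussIter (-x) 1 1, hneg, gaussIter_one, gaussIter_one]
    generalize Int.fract x = t at h0 h1
    have ht : 0 < 1 - t := by linarith
    have hfract : Int.fract (1 - t)⁻¹ = t / (1 - t) := by
      refine Int.fract_eq_iff.mpr ⟨by positivity, by rw [div_lt_one ht]; linarith, 1, ?_⟩
      field_simp
      push_cast
      ring
    rw [hfract]
    push_cast
    field_simp
    ring
  have hshift := add_intCast (gaussIter x 1) (-1)
  rw [← hneg2] at hshift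
  exact ((gaussIter_right (-x) 2).trans hshift).trans (gaussIter_right x 1).symm

theorem neg (hx : Irrational x) : TailEquiv 1 (-x) x := by
  have hfract : Irrational (Int.fract x) := hx.sub_intCast _
  have h0 : 0 < Int.fract x := (Int.fract_nonneg x).lt_of_ne' hfract.ne_zero
  rcases lt_trichotomy (Int.fract x) (1 / 2) with h | h | h
  · exact neg_of_fract_lt_half h0 h
  · exact absurd h (by simpa using hfract.ne_rational 1 2)
  · have hneg := Int.fract_neg h0.ne'
    simpa using (neg_of_fract_lt_half (x := -x) (by linarith [Int.fract_lt_one x])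
      (by linarith)).symm

theorem inv_of_pos (hx : Irrational x) (h0 : 0 < x) : TailEquiv 1 x⁻¹ x := by
  have inv_of_lt_one : ∀ {y : ℝ}, 0 < y → y < 1 → TailEquiv 1 y⁻¹ y := by
    intro y hy0 hy1
    have h : gaussIter y 1 = y⁻¹ := by
      rw [gaussIter_one, Int.fract_eq_self.mpr ⟨hy0.le, hy1⟩]
    exact h ▸ (gaussIter_right y 1).symm
  rcases hx.ne_one.lt_or_gt with h | h
  · exact inv_of_lt_one h0 h
  · simpa using (inv_of_lt_one (inv_pos.mpr h0) (inv_lt_one_of_one_lt₀ h)).symm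

theorem inv (hx : Irrational x) : TailEquiv 1 x⁻¹ x := by
  rcases hx.ne_zero.lt_or_gt with h | h
  · have hinv := inv_of_pos hx.neg (neg_pos.mpr h)
    rw [inv_neg] at hinv
    exact ((neg hx.inv).symm.trans hinv).trans (neg hx)
  · exact inv_of_pos hx h

theorem neg_inv (hx : Irrational x) : TailEquiv 0 (-x⁻¹) x := (neg hx.inv).trans (inv hx)

theorem exists_odd_period (h : TailEquiv 1 x x) :
    ∃ N P : ℕ, Odd P ∧ IsEventuallyPeriodicCF x N P := by
  obtain ⟨N, M, hparity, hNM⟩ := h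
  wlog hle : N ≤ M generalizing N M
  · exact this M N (by rwa [add_comm]) hNM.symm (by omega)
  have hodd : Odd (M - N) := by
    obtain ⟨k, hk⟩ := ZMod.natCast_eq_one_iff_odd.mp hparity
    exact ⟨k - N, by omega⟩
  refine ⟨N, M - N, hodd, hodd.pos, fun j ↦ ?_⟩
  rw [← cfTerm_gaussIter x N, hNM, cfTerm_gaussIter]
  congr 1
  omega

end TailEquiv

/-! ### Forms under substitutions -/

theorem eq_of_qval_eq {f g : ℤ × ℤ × ℤ} (h : ∀ x y, qval f x y = qval g x y) : f = g := by
  have h10 := h 1 0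
  have h01 := h 0 1
  have h11 := h 1 1
  simp only [qval] at h10 h01 h11
  ext <;> linarith

/-- The form obtained from `f` by the substitution with matrix `A`. -/
def formComp (f : ℤ × ℤ × ℤ) (A : Matrix (Fin 2) (Fin 2) ℤ) : ℤ × ℤ × ℤ :=
  (qval f (A 0 0) (A 1 0), qval f (A 0 1) (A 1 1),
    2 * f.1 * A 0 0 * A 0 1 + 2 * f.2.1 * A 1 0 * A 1 1 + f.2.2 * (A 0 0 * A 1 1 + A 0 1 * A 1 0))

theorem qval_formComp (f : ℤ × ℤ × ℤ) (A : Matrix (Fin 2) (Fin 2) ℤ) (x y : ℤ) :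
    qval (formComp f A) x y = qval f (A 0 0 * x + A 0 1 * y) (A 1 0 * x + A 1 1 * y) := by
  simp only [qval, formComp]
  ring

theorem formComp_one (f : ℤ × ℤ × ℤ) : formComp f 1 = f :=
  eq_of_qval_eq fun x y ↦ by simp [qval_formComp]

theorem formComp_mul (f : ℤ × ℤ × ℤ) (A B : Matrix (Fin 2) (Fin 2) ℤ) :
    formComp f (A * B) = formComp (formComp f A) B := by
  refine eq_of_qval_eq fun x y ↦ ?_
  simp only [qval_formComp, mul_apply, Fin.sum_univ_two]
  congr 1 <;> ring

theorem formComp_T_zpow (f : ℤ × ℤ × ℤ) (a : ℤ) :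
    formComp f (ModularGroup.T ^ a : SL(2, ℤ)) =
      (f.1, f.1 * a ^ 2 + f.2.1 + f.2.2 * a, 2 * f.1 * a + f.2.2) := by
  simp [formComp, qval, ModularGroup.coe_T_zpow]

theorem formComp_S (f : ℤ × ℤ × ℤ) : formComp f ModularGroup.S = (f.2.1, f.1, -f.2.2) := by
  simp [formComp, qval, ModularGroup.S]

theorem formDisc_formComp (f : ℤ × ℤ × ℤ) (A : Matrix (Fin 2) (Fin 2) ℤ) :
    formDisc (formComp f A) = A.det ^ 2 * formDisc f := by
  simp only [formDisc, formComp, qval, det_fin_two]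
  ring

theorem formDisc_formComp_SL (f : ℤ × ℤ × ℤ) (A : SL(2, ℤ)) :
    formDisc (formComp f A) = formDisc f := by
  rw [formDisc_formComp, A.det_coe, one_pow, one_mul]

theorem sLEquiv_iff_exists_formComp {f g : ℤ × ℤ × ℤ} :
    SLEquiv f g ↔ ∃ A : SL(2, ℤ), g = formComp f A := by
  constructor
  · rintro ⟨a, b, c, d, hdet, h⟩
    refine ⟨⟨!![a, b; c, d], by rwa [det_fin_two_of]⟩, eq_of_qval_eq fun x y ↦ ?_⟩
    simpa [qval_formComp] using h x y
  · rintro ⟨A, rfl⟩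
    exact ⟨A 0 0, A 0 1, A 1 0, A 1 1, by rw [← det_fin_two, A.det_coe], qval_formComp f A⟩

namespace SLEquiv

variable {f g h : ℤ × ℤ × ℤ}

theorem refl (f : ℤ × ℤ × ℤ) : SLEquiv f f :=
  sLEquiv_iff_exists_formComp.mpr ⟨1, by
    rw [Matrix.SpecialLinearGroup.coe_one, formComp_one]⟩

theorem symm (hfg : SLEquiv f g) : SLEquiv g f := by
  obtain ⟨A, rfl⟩ := sLEquiv_iff_exists_formComp.mp hfg
  refine sLEquiv_iff_exists_formComp.mpr ⟨A⁻¹, ?_⟩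
  rw [← formComp_mul, ← Matrix.SpecialLinearGroup.coe_mul, mul_inv_cancel,
    Matrix.SpecialLinearGroup.coe_one, formComp_one]

theorem trans (hfg : SLEquiv f g) (hgh : SLEquiv g h) : SLEquiv f h := by
  obtain ⟨A, rfl⟩ := sLEquiv_iff_exists_formComp.mp hfg
  obtain ⟨B, rfl⟩ := sLEquiv_iff_exists_formComp.mp hgh
  exact sLEquiv_iff_exists_formComp.mpr
    ⟨A * B, by rw [Matrix.SpecialLinearGroup.coe_mul, formComp_mul]⟩

theorem formDisc_eq (hfg : SLEquiv f g) : formDisc g = formDisc f := by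
  obtain ⟨A, rfl⟩ := sLEquiv_iff_exists_formComp.mp hfg
  exact formDisc_formComp_SL f A

theorem antipF (hfg : SLEquiv f g) : SLEquiv (antipF f) (antipF g) := by
  obtain ⟨a, b, c, d, hdet, h⟩ := hfg
  have qval_antipF : ∀ (f : ℤ × ℤ × ℤ) (x y : ℤ), qval (_root_.antipF f) x y = -qval f y x := by
    intro f x y
    simp only [qval, _root_.antipF]
    ring
  refine ⟨d, c, b, a, by linarith, fun x y ↦ ?_⟩
  rw [qval_antipF, qval_antipF, h, add_comm (a * y), add_comm (c * y)]

end SLEquiv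

theorem antipF_involutive : Involutive antipF := fun f ↦ by simp [antipF]

theorem formDisc_antipF (f : ℤ × ℤ × ℤ) : formDisc (antipF f) = formDisc f := by
  simp only [formDisc, antipF]
  ring

theorem formDisc_iterate_antipF (f : ℤ × ℤ × ℤ) (n : ℕ) :
    formDisc (antipF^[n] f) = formDisc f := by
  rcases n.even_or_odd with hn | hn
  · rw [antipF_involutive.iterate_even hn, id]
  · rw [antipF_involutive.iterate_odd hn, formDisc_antipF]

/-! ### Contents and primitive forms -/

/-- The content `gcd(m, n, k)` of the form `(m, n, k)`; primitive forms are those of content `1`. -/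
def formContent (f : ℤ × ℤ × ℤ) : ℕ := Int.gcd f.1 (Int.gcd f.2.1 f.2.2)

theorem isPrimitiveForm_iff {f : ℤ × ℤ × ℤ} : IsPrimitiveForm f ↔ formContent f = 1 := Iff.rfl

theorem dvd_formContent_iff {d : ℕ} {f : ℤ × ℤ × ℤ} :
    d ∣ formContent f ↔ (d : ℤ) ∣ f.1 ∧ (d : ℤ) ∣ f.2.1 ∧ (d : ℤ) ∣ f.2.2 := by
  rw [formContent, Int.dvd_gcd_iff, Int.dvd_coe_gcd_iff]

theorem formContent_smul (a : ℤ) (f : ℤ × ℤ × ℤ) :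
    formContent (a • f) = a.natAbs * formContent f := by
  simp only [formContent, Prod.smul_fst, Prod.smul_snd, smul_eq_mul, Int.gcd_mul_left]
  simp only [Int.gcd_eq_natAbs_gcd_natAbs, Int.natAbs_mul, Int.natAbs_natCast, Nat.gcd_mul_left]

theorem formContent_dvd_formContent_formComp (f : ℤ × ℤ × ℤ) (A : Matrix (Fin 2) (Fin 2) ℤ) :
    formContent f ∣ formContent (formComp f A) := by
  obtain ⟨hm, hn, hk⟩ := dvd_formContent_iff.mp (dvd_refl (formContent f))
  have dvd_qval : ∀ x y, (formContent f : ℤ) ∣ qval f x y := fun x y ↦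
    ((hm.mul_right _).add (hn.mul_right _)).add ((hk.mul_right x).mul_right y)
  refine dvd_formContent_iff.mpr ⟨dvd_qval _ _, dvd_qval _ _, ?_⟩
  exact ((((hm.mul_left 2).mul_right _).mul_right _).add
    (((hn.mul_left 2).mul_right _).mul_right _)).add (hk.mul_right _)

theorem SLEquiv.formContent_eq {f g : ℤ × ℤ × ℤ} (h : SLEquiv f g) :
    formContent f = formContent g := by
  have formContent_dvd : ∀ {f g}, SLEquiv f g → formContent f ∣ formContent g := by
    intro f g h
    obtain ⟨A, rfl⟩ := sLEquiv_iff_exists_formComp.mp h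
    exact formContent_dvd_formContent_formComp f A
  exact Nat.dvd_antisymm (formContent_dvd h) (formContent_dvd h.symm)

theorem formContent_antipF (f : ℤ × ℤ × ℤ) : formContent (antipF f) = formContent f := by
  refine Nat.dvd_left_iff_eq.mp fun d ↦ ?_
  simp only [dvd_formContent_iff, antipF, dvd_neg]
  tauto

theorem formContent_iterate_antipF (f : ℤ × ℤ × ℤ) (n : ℕ) :
    formContent (antipF^[n] f) = formContent f := by
  rcases n.even_or_odd with hn | hn
  · rw [antipF_involutive.iterate_even hn, id]
  · rw [antipF_involutive.iterate_odd hn, formContent_antipF]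

theorem exists_primitive_smul_eq {f : ℤ × ℤ × ℤ} (hf : f ≠ 0) :
    ∃ (d : ℤ) (g : ℤ × ℤ × ℤ), 0 < d ∧ IsPrimitiveForm g ∧ d • g = f := by
  obtain ⟨⟨m, hm⟩, ⟨n, hn⟩, ⟨k, hk⟩⟩ := dvd_formContent_iff.mp (dvd_refl (formContent f))
  have hsmul : (formContent f : ℤ) • (m, n, k) = f := by ext <;> simp [← hm, ← hn, ← hk]
  have hpos : 0 < formContent f := by
    refine Nat.pos_of_ne_zero fun h ↦ hf ?_
    rw [← hsmul, h, Nat.cast_zero, zero_smul]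
  refine ⟨formContent f, (m, n, k), by exact_mod_cast hpos, ?_, hsmul⟩
  have hcontent := formContent_smul (formContent f) (m, n, k)
  rw [hsmul, Int.natAbs_natCast] at hcontent
  exact Nat.eq_of_mul_eq_mul_left hpos (by rw [mul_one]; exact hcontent.symm)

/-! ### Roots of forms -/

theorem eq_zero_of_mul_irrational_add_eq_zero {x : ℝ} (hx : Irrational x) {a b : ℤ}
    (h : a * x + b = 0) : a = 0 ∧ b = 0 := by
  have ha : a = 0 := by
    by_contra ha
    exact ((hx.intCast_mul ha).add_intCast b).ne_zero h
  subst ha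
  exact ⟨rfl, by simpa using h⟩

section xiPlus

variable {f g : ℤ × ℤ × ℤ}

theorem irrational_sqrt_formDisc_iff :
    Irrational √(formDisc f : ℝ) ↔ 0 < formDisc f ∧ ¬IsSquare (formDisc f) := by
  rw [irrational_sqrt_intCast_iff, and_comm]
  refine and_congr_left fun hsq ↦ ⟨fun h ↦ h.lt_of_ne fun h0 ↦ hsq ⟨0, h0.symm⟩, le_of_lt⟩

theorem fst_ne_zero_of_irrational_sqrt (hf : Irrational √(formDisc f : ℝ)) : f.1 ≠ 0 := by
  intro h
  refine (irrational_sqrt_formDisc_iff.mp hf).2 ⟨f.2.2, ?_⟩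
  rw [formDisc, h]
  ring

theorem xiPlus_eq_iff (hf : f.1 ≠ 0) {x : ℝ} :
    xiPlus f = x ↔ 2 * f.1 * x + f.2.2 = √(formDisc f : ℝ) := by
  have hf' : (2 * f.1 : ℝ) ≠ 0 := by exact_mod_cast mul_ne_zero two_ne_zero hf
  rw [xiPlus, div_eq_iff hf', neg_add_eq_iff_eq_add]
  constructor <;> intro h <;> linarith

theorem xiPlus_root (hf : f.1 ≠ 0) (hdisc : 0 ≤ formDisc f) :
    f.1 * xiPlus f ^ 2 + f.2.2 * xiPlus f + f.2.1 = 0 := by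
  have hsq := Real.sq_sqrt (Int.cast_nonneg (R := ℝ) hdisc)
  rw [← (xiPlus_eq_iff hf).mp rfl, formDisc] at hsq
  push_cast at hsq
  have hf' : (4 * f.1 : ℝ) ≠ 0 := by exact_mod_cast mul_ne_zero four_ne_zero hf
  refine (mul_eq_zero.mp ?_).resolve_left hf'
  linear_combination hsq

theorem irrational_xiPlus (hf : Irrational √(formDisc f : ℝ)) : Irrational (xiPlus f) := by
  rw [← (xiPlus_eq_iff (fst_ne_zero_of_irrational_sqrt hf)).mp rfl] at hf
  have h : Irrational ((2 * f.1 : ℤ) * xiPlus f) := by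
    push_cast
    exact hf.of_add_intCast _
  exact h.of_intCast_mul _

theorem xiPlus_formComp_T_zpow (hf : f.1 ≠ 0) (a : ℤ) :
    xiPlus (formComp f (ModularGroup.T ^ a : SL(2, ℤ))) = xiPlus f - a := by
  have hT := formComp_T_zpow f a
  rw [xiPlus_eq_iff (by rwa [hT]), formDisc_formComp_SL, ← (xiPlus_eq_iff hf).mp rfl, hT]
  push_cast
  ring

theorem xiPlus_formComp_S (hf : Irrational √(formDisc f : ℝ)) :
    xiPlus (formComp f ModularGroup.S) = -(xiPlus f)⁻¹ := by
  have hf1 := fst_ne_zero_of_irrational_sqrt hf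
  have hξ := (irrational_xiPlus hf).ne_zero
  rw [xiPlus_eq_iff (fst_ne_zero_of_irrational_sqrt <| by rwa [formDisc_formComp_SL]),
    formDisc_formComp_SL, ← (xiPlus_eq_iff hf1).mp rfl, formComp_S]
  push_cast
  field_simp
  linear_combination -2 * xiPlus_root hf1 (irrational_sqrt_formDisc_iff.mp hf).1.le

theorem xiPlus_antipF (hf : Irrational √(formDisc f : ℝ)) : xiPlus (antipF f) = (xiPlus f)⁻¹ := by
  have hf1 := fst_ne_zero_of_irrational_sqrt hf
  have hξ := (irrational_xiPlus hf).ne_zero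
  rw [xiPlus_eq_iff (fst_ne_zero_of_irrational_sqrt <| by rwa [formDisc_antipF]),
    formDisc_antipF, ← (xiPlus_eq_iff hf1).mp rfl]
  simp only [antipF, Int.cast_neg]
  field_simp
  linear_combination -2 * xiPlus_root hf1 (irrational_sqrt_formDisc_iff.mp hf).1.le

theorem formDisc_smul (a : ℤ) (f : ℤ × ℤ × ℤ) : formDisc (a • f) = a ^ 2 * formDisc f := by
  simp only [formDisc, Prod.smul_fst, Prod.smul_snd, smul_eq_mul]
  ring

theorem xiPlus_smul {a : ℤ} (ha : 0 < a) (f : ℤ × ℤ × ℤ) : xiPlus (a • f) = xiPlus f := by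
  have ha' : (0 : ℝ) < a := by exact_mod_cast ha
  have hsqrt : √(formDisc (a • f) : ℝ) = a * √(formDisc f : ℝ) := by
    rw [formDisc_smul, Int.cast_mul, Int.cast_pow, Real.sqrt_mul (sq_nonneg _),
      Real.sqrt_sq ha'.le]
  rw [xiPlus, xiPlus, hsqrt]
  refine Eq.trans ?_ (mul_div_mul_left _ _ ha'.ne')
  simp only [Prod.smul_fst, Prod.smul_snd, smul_eq_mul, Int.cast_mul]
  congr 1 <;> ring

theorem smul_eq_smul_of_xiPlus_eq (hf : Irrational √(formDisc f : ℝ))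
    (hg : Irrational √(formDisc g : ℝ)) (h : xiPlus f = xiPlus g) : g.1 • f = f.1 • g := by
  have hrootf := xiPlus_root (fst_ne_zero_of_irrational_sqrt hf)
    (irrational_sqrt_formDisc_iff.mp hf).1.le
  have hrootg := xiPlus_root (fst_ne_zero_of_irrational_sqrt hg)
    (irrational_sqrt_formDisc_iff.mp hg).1.le
  rw [← h] at hrootg
  have hlin : ((g.1 * f.2.2 - f.1 * g.2.2 : ℤ) : ℝ) * xiPlus f
      + ((g.1 * f.2.1 - f.1 * g.2.1 : ℤ) : ℝ) = 0 := by
    push_cast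
    linear_combination g.1 * hrootf - f.1 * hrootg
  obtain ⟨hk, hn⟩ := eq_zero_of_mul_irrational_add_eq_zero (irrational_xiPlus hf) hlin
  exact Prod.ext (mul_comm _ _) (Prod.ext (sub_eq_zero.mp hn) (sub_eq_zero.mp hk))

theorem eq_of_xiPlus_eq (hf : Irrational √(formDisc f : ℝ)) (hg : Irrational √(formDisc g : ℝ))
    (hfprim : IsPrimitiveForm f) (hgprim : IsPrimitiveForm g) (h : xiPlus f = xiPlus g) :
    f = g := by
  have hf1 := fst_ne_zero_of_irrational_sqrt hf
  have hsmul := smul_eq_smul_of_xiPlus_eq hf hg h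
  have habs : g.1.natAbs = f.1.natAbs := by
    have hcontent := congrArg formContent hsmul
    rwa [formContent_smul, formContent_smul, show formContent f = 1 from hfprim,
      show formContent g = 1 from hgprim, mul_one, mul_one] at hcontent
  rcases Int.natAbs_eq_natAbs_iff.mp habs with heq | hneg
  · rw [heq] at hsmul
    exact smul_right_injective _ hf1 hsmul
  · have hgf : g = -f := by
      rw [hneg, neg_smul, ← smul_neg] at hsmul
      exact (smul_right_injective _ hf1 hsmul).symm
    have hf2 := (xiPlus_eq_iff hf1).mp rfl
    have hg2 := (xiPlus_eq_iff (fst_ne_zero_of_irrational_sqrt hg)).mp h.symm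
    have hfpos : 0 < √(formDisc f : ℝ) := (Real.sqrt_nonneg _).lt_of_ne' hf.ne_zero
    simp only [hgf, Prod.fst_neg, Prod.snd_neg, Int.cast_neg] at hg2
    linarith [Real.sqrt_nonneg (formDisc (-f) : ℝ)]

end xiPlus

/-! ### Equivalence and tails -/

theorem tailEquiv_xiPlus_formComp {f : ℤ × ℤ × ℤ} (hf : Irrational √(formDisc f : ℝ))
    (A : SL(2, ℤ)) : TailEquiv 0 (xiPlus (formComp f A)) (xiPlus f) := by
  have hA : A ∈ Subgroup.closure {ModularGroup.S, ModularGroup.T} := by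
    rw [SpecialLinearGroup.SL2Z_generators]
    exact Subgroup.mem_top A
  induction hA using Subgroup.closure_induction generalizing f with
  | mem B hB =>
    rcases hB with rfl | rfl
    · rw [xiPlus_formComp_S hf]
      exact TailEquiv.neg_inv (irrational_xiPlus hf)
    · have hT := xiPlus_formComp_T_zpow (fst_ne_zero_of_irrational_sqrt hf) 1
      rw [zpow_one] at hT
      rw [hT, sub_eq_add_neg, ← Int.cast_neg]
      exact TailEquiv.add_intCast _ _
  | one =>
    rw [Matrix.SpecialLinearGroup.coe_one, formComp_one]
    exact TailEquiv.refl _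
  | mul B C _ _ hB hC =>
    rw [Matrix.SpecialLinearGroup.coe_mul, formComp_mul]
    exact (hC (by rwa [formDisc_formComp_SL])).trans (hB hf)
  | inv B _ hB =>
    have h := hB (f := formComp f (B⁻¹ : SL(2, ℤ))) (by rwa [formDisc_formComp_SL])
    rw [← formComp_mul, ← Matrix.SpecialLinearGroup.coe_mul, inv_mul_cancel,
      Matrix.SpecialLinearGroup.coe_one, formComp_one] at h
    exact h.symm

theorem tailEquiv_of_sLEquiv {f g : ℤ × ℤ × ℤ} (hf : Irrational √(formDisc f : ℝ))
    (h : SLEquiv f g) : TailEquiv 0 (xiPlus f) (xiPlus g) := by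
  obtain ⟨A, rfl⟩ := sLEquiv_iff_exists_formComp.mp h
  exact (tailEquiv_xiPlus_formComp hf A).symm

theorem tailEquiv_xiPlus_antipF {f : ℤ × ℤ × ℤ} (hf : Irrational √(formDisc f : ℝ)) :
    TailEquiv 1 (xiPlus (antipF f)) (xiPlus f) := by
  rw [xiPlus_antipF hf]
  exact TailEquiv.inv (irrational_xiPlus hf)

/-- Taking one partial quotient off `ξ⁺` amounts to a translation followed by the antipode. -/
theorem exists_sLEquiv_xiPlus_eq_gaussIter {f : ℤ × ℤ × ℤ} (hf : Irrational √(formDisc f : ℝ))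
    (N : ℕ) : ∃ F, SLEquiv (antipF^[N] f) F ∧ xiPlus F = gaussIter (xiPlus f) N := by
  induction N with
  | zero => exact ⟨f, SLEquiv.refl f, rfl⟩
  | succ N ih =>
    obtain ⟨F, hfF, hF⟩ := ih
    have hFdisc : Irrational √(formDisc F : ℝ) := by
      rwa [hfF.formDisc_eq, formDisc_iterate_antipF]
    set G := formComp F (ModularGroup.T ^ ⌊xiPlus F⌋ : SL(2, ℤ))
    have hFG : SLEquiv F G := sLEquiv_iff_exists_formComp.mpr ⟨_, rfl⟩
    have hG : xiPlus G = Int.fract (xiPlus F) :=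
      xiPlus_formComp_T_zpow (fst_ne_zero_of_irrational_sqrt hFdisc) _
    refine ⟨antipF G, ?_, ?_⟩
    · rw [iterate_succ_apply']
      exact (hfF.trans hFG).antipF
    · rw [xiPlus_antipF (by rwa [hFG.formDisc_eq]), hG, ← gaussIter_one, hF, gaussIter_gaussIter]

theorem sLEquiv_iff_tailEquiv {f g : ℤ × ℤ × ℤ} (hf : Irrational √(formDisc f : ℝ))
    (hg : Irrational √(formDisc g : ℝ)) (hfprim : IsPrimitiveForm f) (hgprim : IsPrimitiveForm g) :
    SLEquiv f g ↔ TailEquiv 0 (xiPlus f) (xiPlus g) := by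
  refine ⟨tailEquiv_of_sLEquiv hf, ?_⟩
  rintro ⟨N, M, hparity, hNM⟩
  obtain ⟨F, hfF, hF⟩ := exists_sLEquiv_xiPlus_eq_gaussIter hf N
  obtain ⟨G, hgG, hG⟩ := exists_sLEquiv_xiPlus_eq_gaussIter hg M
  have hFG : F = G := by
    refine eq_of_xiPlus_eq ?_ ?_ ?_ ?_ (by rw [hF, hG, hNM])
    · rwa [hfF.formDisc_eq, formDisc_iterate_antipF]
    · rwa [hgG.formDisc_eq, formDisc_iterate_antipF]
    · rwa [isPrimitiveForm_iff, ← hfF.formContent_eq, formContent_iterate_antipF]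
    · rwa [isPrimitiveForm_iff, ← hgG.formContent_eq, formContent_iterate_antipF]
  subst hFG
  have hiterate : SLEquiv (antipF^[N] f) (antipF^[M] g) := hfF.trans hgG.symm
  have hNM_even : Even (N + M) := ZMod.natCast_eq_zero_iff_even.mp hparity
  rcases N.even_or_odd with hN | hN
  · have hM : Even M := (Nat.even_add.mp hNM_even).mp hN
    rwa [antipF_involutive.iterate_even hN, antipF_involutive.iterate_even hM] at hiterate
  · have hM : Odd M := (Nat.even_add'.mp hNM_even).mp hN
    rw [antipF_involutive.iterate_odd hN, antipF_involutive.iterate_odd hM] at hiterate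
    simpa only [antipF_involutive _] using hiterate.antipF

/-! ### Periods -/

theorem periodic_gcd {α : Type*} {u : ℕ → α} {P Q : ℕ} (hP : Periodic u P) (hQ : Periodic u Q) :
    Periodic u (P.gcd Q) := by
  let shift : (ℕ → α) → ℕ → α := fun v j ↦ v (j + 1)
  have shift_iterate : ∀ n, shift^[n] u = fun j ↦ u (j + n) := by
    intro n
    induction n with
    | zero => rfl
    | succ n ih =>
      rw [iterate_succ_apply', ih]
      exact funext fun j ↦ congrArg u (by ring)
  have periodic_iff : ∀ n, Periodic u n ↔ IsPeriodicPt shift n u := fun n ↦ by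
    rw [IsPeriodicPt, IsFixedPt, shift_iterate, funext_iff, Periodic]
  rw [periodic_iff] at hP hQ ⊢
  exact hP.gcd hQ

theorem prefix_flatten_replicate_append_of_hasPeriod {α : Type*} {w : List α} {p : ℕ}
    (h : w.HasPeriod p) (k : ℕ) : w <+: (List.replicate k (w.take p)).flatten ++ w := by
  induction k with
  | zero => simp
  | succ k ih =>
    rw [List.replicate_succ, List.flatten_cons, List.append_assoc]
    exact List.IsPrefix.trans h ((List.prefix_append_right_inj _).mpr ih)

theorem eq_flatten_replicate_of_hasPeriod {α : Type*} {w : List α} {p k : ℕ}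
    (h : w.HasPeriod p) (hk : 1 ≤ k) (hlen : w.length = p * k) :
    w = (List.replicate k (w.take p)).flatten := by
  have hlen' : (List.replicate k (w.take p)).flatten.length = w.length := by
    simp [hlen, Nat.le_mul_of_pos_right p hk, mul_comm]
  exact (List.prefix_of_prefix_length_le (prefix_flatten_replicate_append_of_hasPeriod h k)
    (List.prefix_append _ _) hlen'.ge).eq_of_length hlen'.symm

/-- The periodic sequence `s s s ⋯` obtained by repeating the word `s`. -/
def repeatWord (s : List ℤ) (j : ℕ) : ℤ := s.getD (j % s.length) 0

theorem repeatWord_of_lt {s : List ℤ} {j : ℕ} (hj : j < s.length) : repeatWord s j = s[j] := by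
  rw [repeatWord, Nat.mod_eq_of_lt hj, List.getD_eq_getElem _ _ hj]

theorem periodic_repeatWord (s : List ℤ) : Periodic (repeatWord s) s.length := fun j ↦ by
  rw [repeatWord, repeatWord, Nat.add_mod_right]

theorem repeatWord_add_mul_length (s : List ℤ) (j n : ℕ) :
    repeatWord s (j + n * s.length) = repeatWord s j := by
  rw [repeatWord, repeatWord, Nat.add_mul_mod_self_right]

theorem repeatWord_rotate (s : List ℤ) (n j : ℕ) :
    repeatWord (s.rotate n) j = repeatWord s (j + n) := by
  rcases s.length.eq_zero_or_pos with h | h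
  · rw [List.length_eq_zero_iff.mp h, List.rotate_nil]
    simp [repeatWord]
  · rw [repeatWord, repeatWord, List.length_rotate, List.getD_eq_getElem?_getD,
      List.getElem?_rotate (Nat.mod_lt _ h), Nat.mod_add_mod, List.getD_eq_getElem?_getD]

theorem IsPeriodWord.length_dvd {s : List ℤ} (hs : IsPeriodWord s) {Q : ℕ}
    (hQ : Periodic (repeatWord s) Q) : s.length ∣ Q := by
  obtain ⟨hne, -, hprim⟩ := hs
  have hpos : 0 < s.length := List.length_pos_iff.mpr hne
  obtain ⟨k, hk⟩ := Nat.gcd_dvd_left s.length Q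
  have hperiod : s.HasPeriod (s.length.gcd Q) := by
    refine List.hasPeriod_iff_getElem?.mpr fun i hi ↦ ?_
    have h := periodic_gcd (periodic_repeatWord s) hQ i
    rw [repeatWord_of_lt (by omega), repeatWord_of_lt (by omega)] at h
    rw [List.getElem?_eq_getElem (by omega), List.getElem?_eq_getElem (by omega), h]
  have hk1 : 1 ≤ k := Nat.pos_of_mul_pos_left (hk ▸ hpos)
  have hk2 : ¬ 2 ≤ k := fun h ↦ hprim _ k h (eq_flatten_replicate_of_hasPeriod hperiod hk1 hk)
  obtain rfl : k = 1 := by omega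
  rw [hk, mul_one]
  exact Nat.gcd_dvd_right _ _

/-- The partial quotients of `x` are, from some index on, those of the periodic sequence
`s s s ⋯`. -/
def HasCFTail (s : List ℤ) (x : ℝ) : Prop := ∃ N, ∀ j, cfTerm x (N + j) = repeatWord s j

theorem IsCFPeriod.hasCFTail {s : List ℤ} {x : ℝ} (h : IsCFPeriod s x) : HasCFTail s x := h.2.1

namespace HasCFTail

variable {s t : List ℤ} {x y : ℝ}

theorem of_isRotated (hx : HasCFTail s x) (hst : s ~r t) : HasCFTail t x := by
  obtain ⟨N, hN⟩ := hx
  obtain ⟨n, rfl⟩ := hst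
  exact ⟨N + n, fun j ↦ by rw [repeatWord_rotate, ← hN, add_assoc, add_comm n]⟩

theorem of_tailEquiv {ε : ZMod 2} (hs : s ≠ []) (hx : HasCFTail s x) (hxy : TailEquiv ε x y) :
    HasCFTail s y := by
  obtain ⟨n, hn⟩ := hx
  obtain ⟨N, M, -, hNM⟩ := hxy
  have hN : N ≤ N * s.length := Nat.le_mul_of_pos_right N (List.length_pos_iff.mpr hs)
  refine ⟨M + (n + N * s.length - N), fun j ↦ ?_⟩
  calc cfTerm y (M + (n + N * s.length - N) + j)
      = cfTerm x (N + (n + N * s.length - N + j)) := by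
        rw [← cfTerm_gaussIter x, hNM, cfTerm_gaussIter, add_assoc]
    _ = cfTerm x (n + (j + N * s.length)) := by
        congr 1
        omega
    _ = repeatWord s j := by rw [hn, repeatWord_add_mul_length]

theorem periodic_repeatWord (hs : s ≠ []) (hx : HasCFTail s x) {M Q : ℕ}
    (h : IsEventuallyPeriodicCF x M Q) : Periodic (repeatWord s) Q := by
  obtain ⟨N, hN⟩ := hx
  intro j
  have hM : M ≤ M * s.length := Nat.le_mul_of_pos_right M (List.length_pos_iff.mpr hs)
  calc repeatWord s (j + Q) = cfTerm x (N + (j + Q + M * s.length)) := by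
        rw [hN, repeatWord_add_mul_length]
    _ = cfTerm x (M + (N + j + M * s.length - M) + Q) := by
        congr 1
        omega
    _ = cfTerm x (N + (j + M * s.length)) := by
        rw [h.2]
        congr 1
        omega
    _ = repeatWord s j := by rw [hN, repeatWord_add_mul_length]

theorem isCFPeriod (hs : IsPeriodWord s) (hx : HasCFTail s x) : IsCFPeriod s x :=
  ⟨hs.1, hx, fun _ hQ ⟨_, h⟩ ↦ Nat.le_of_dvd hQ (hs.length_dvd (hx.periodic_repeatWord hs.1 h))⟩

theorem tailEquiv_zero_of_odd_length (hodd : Odd s.length) (hx : HasCFTail s x)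
    (hy : HasCFTail s y) : TailEquiv 0 x y := by
  obtain ⟨N, hN⟩ := hx
  obtain ⟨M, hM⟩ := hy
  rcases (N + M).even_or_odd with h | h
  · exact ⟨N, M, h.natCast_zmod_two, gaussIter_eq_of_cfTerm_eq fun j ↦ by rw [hN, hM]⟩
  · refine ⟨N + s.length, M, ?_, gaussIter_eq_of_cfTerm_eq fun j ↦ ?_⟩
    · rw [ZMod.natCast_eq_zero_iff_even, add_right_comm]
      exact h.add_odd hodd
    · rw [hM, add_assoc, hN, add_comm, _root_.periodic_repeatWord s]

end HasCFTail

/-! ### Continued fractions with prescribed period -/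

/-- The continued fraction `a₁ + 1/(a₂ + 1/(⋯ + 1/(aₙ + 1/x)))` with partial quotients
`s = [a₁, …, aₙ]` and complete quotient `x`. -/
noncomputable def prependCF (s : List ℤ) (x : ℝ) : ℝ := s.foldr (fun a y ↦ a + y⁻¹) x

theorem prependCF_cons (a : ℤ) (s : List ℤ) (x : ℝ) :
    prependCF (a :: s) x = a + (prependCF s x)⁻¹ := rfl

section prependCF

variable {s : List ℤ} {x : ℝ}

theorem prependCF_pos (hs : ∀ a ∈ s, 0 < a) (hx : 0 < x) : 0 < prependCF s x := by
  induction s with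
  | nil => exact hx
  | cons a s ih =>
    rw [List.forall_mem_cons] at hs
    exact add_pos (by exact_mod_cast hs.1) (inv_pos.mpr (ih hs.2))

theorem one_lt_prependCF_of_ne_nil (hne : s ≠ []) (hs : ∀ a ∈ s, 0 < a) (hx : 0 < x) :
    1 < prependCF s x := by
  obtain ⟨a, s, rfl⟩ := List.exists_cons_of_ne_nil hne
  rw [List.forall_mem_cons] at hs
  have ha : (1 : ℝ) ≤ a := by exact_mod_cast hs.1
  rw [prependCF_cons]
  linarith [inv_pos.mpr (prependCF_pos hs.2 hx)]

theorem one_lt_prependCF (hs : ∀ a ∈ s, 0 < a) (hx : 1 < x) : 1 < prependCF s x := by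
  rcases eq_or_ne s [] with rfl | hne
  · exact hx
  · exact one_lt_prependCF_of_ne_nil hne hs (one_pos.trans hx)

theorem fract_prependCF_cons {a : ℤ} (hs : ∀ a ∈ s, 0 < a) (hx : 1 < x) :
    Int.fract (prependCF (a :: s) x) = (prependCF s x)⁻¹ := by
  have h := one_lt_prependCF hs hx
  rw [prependCF_cons, Int.fract_intCast_add, Int.fract_eq_self]
  exact ⟨inv_nonneg.mpr (one_pos.trans h).le, inv_lt_one_of_one_lt₀ h⟩

theorem gaussIter_prependCF (hs : ∀ a ∈ s, 0 < a) (hx : 1 < x) :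
    gaussIter (prependCF s x) s.length = x := by
  induction s with
  | nil => rfl
  | cons a s ih =>
    rw [List.forall_mem_cons] at hs
    rw [List.length_cons, add_comm, ← gaussIter_gaussIter, gaussIter_one,
      fract_prependCF_cons hs.2 hx, inv_inv, ih hs.2]

theorem cfTerm_prependCF (hs : ∀ a ∈ s, 0 < a) (hx : 1 < x) {i : ℕ} (hi : i < s.length) :
    cfTerm (prependCF s x) i = s[i] := by
  induction s generalizing i with
  | nil => exact absurd hi (Nat.not_lt_zero i)
  | cons a s ih =>
    rw [List.forall_mem_cons] at hs
    have hfract := fract_prependCF_cons (a := a) hs.2 hx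
    cases i with
    | zero =>
      rw [Int.fract, prependCF_cons, add_sub_right_comm, add_eq_right, sub_eq_zero] at hfract
      exact_mod_cast hfract.symm
    | succ i =>
      rw [cfTerm_succ, hfract, inv_inv, ih hs.2 (by simpa using hi), List.getElem_cons_succ]

theorem hasCFTail_of_prependCF_eq (hne : s ≠ []) (hs : ∀ a ∈ s, 0 < a) (hx : 0 < x)
    (hfix : prependCF s x = x) : HasCFTail s x := by
  have hx1 : 1 < x := hfix ▸ one_lt_prependCF_of_ne_nil hne hs hx
  have hperiod : gaussIter x s.length = x := by
    nth_rw 1 [← hfix]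
    exact gaussIter_prependCF hs hx1
  have hcfperiod : Periodic (cfTerm x) s.length := fun j ↦ by
    rw [add_comm, ← cfTerm_gaussIter, hperiod]
  refine ⟨0, fun j ↦ ?_⟩
  have hmod : j % s.length < s.length := Nat.mod_lt j (List.length_pos_iff.mpr hne)
  rw [zero_add, ← hcfperiod.map_mod_nat, repeatWord, List.getD_eq_getElem _ _ hmod, ← hfix,
    cfTerm_prependCF hs hx1]

end prependCF

/-- The product of the matrices `!![a, 1; 1, 0]` over the entries `a` of `s`; its entries are
continuants, and as a Möbius transformation it is `prependCF s`. -/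
def continuantMatrix (s : List ℤ) : Matrix (Fin 2) (Fin 2) ℤ :=
  (s.map fun a ↦ !![a, 1; 1, 0]).prod

theorem continuantMatrix_cons (a : ℤ) (s : List ℤ) :
    continuantMatrix (a :: s) =
      !![a * continuantMatrix s 0 0 + continuantMatrix s 1 0,
        a * continuantMatrix s 0 1 + continuantMatrix s 1 1;
        continuantMatrix s 0 0, continuantMatrix s 0 1] := by
  rw [continuantMatrix, List.map_cons, List.prod_cons, ← continuantMatrix]
  ext i j
  fin_cases i <;> fin_cases j <;> simp [mul_apply, Fin.sum_univ_two]

theorem det_continuantMatrix (s : List ℤ) : (continuantMatrix s).det = (-1) ^ s.length := by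
  induction s with
  | nil => exact det_one
  | cons a s ih =>
    rw [continuantMatrix_cons, det_fin_two_of, List.length_cons, pow_succ, ← ih, det_fin_two]
    ring

section continuantMatrix

variable {s : List ℤ}

theorem continuantMatrix_nonneg (hs : ∀ a ∈ s, 0 < a) (i j : Fin 2) :
    0 ≤ continuantMatrix s i j := by
  induction s generalizing i j with
  | nil => fin_cases i <;> fin_cases j <;> simp [continuantMatrix]
  | cons a s ih =>
    rw [List.forall_mem_cons] at hs
    have step : ∀ j, 0 ≤ a * continuantMatrix s 0 j + continuantMatrix s 1 j :=
      fun j ↦ add_nonneg (mul_nonneg hs.1.le (ih hs.2 0 j)) (ih hs.2 1 j)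
    rw [continuantMatrix_cons]
    fin_cases i <;> fin_cases j
    exacts [step 0, step 1, ih hs.2 0 0, ih hs.2 0 1]

theorem continuantMatrix_zero_zero_pos (hs : ∀ a ∈ s, 0 < a) : 0 < continuantMatrix s 0 0 := by
  induction s with
  | nil => simp [continuantMatrix]
  | cons a s ih =>
    rw [List.forall_mem_cons] at hs
    rw [continuantMatrix_cons]
    exact add_pos_of_pos_of_nonneg (mul_pos hs.1 (ih hs.2)) (continuantMatrix_nonneg hs.2 1 0)

theorem continuantMatrix_one_zero_pos (hne : s ≠ []) (hs : ∀ a ∈ s, 0 < a) :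
    0 < continuantMatrix s 1 0 := by
  obtain ⟨a, s, rfl⟩ := List.exists_cons_of_ne_nil hne
  rw [continuantMatrix_cons]
  exact continuantMatrix_zero_zero_pos (List.forall_mem_cons.mp hs).2

theorem continuantMatrix_zero_one_pos (hne : s ≠ []) (hs : ∀ a ∈ s, 0 < a) :
    0 < continuantMatrix s 0 1 := by
  obtain ⟨a, s, rfl⟩ := List.exists_cons_of_ne_nil hne
  rw [List.forall_mem_cons] at hs
  have hq := continuantMatrix_nonneg hs.2 0 1
  have ht := continuantMatrix_nonneg hs.2 1 1
  rw [continuantMatrix_cons]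
  change 0 < a * continuantMatrix s 0 1 + continuantMatrix s 1 1
  rcases hq.lt_or_eq with hq | hq
  · exact add_pos_of_pos_of_nonneg (mul_pos hs.1 hq) ht
  · have hdet := det_continuantMatrix s
    have hunit := pow_ne_zero s.length (neg_ne_zero.mpr (one_ne_zero (α := ℤ)))
    rw [det_fin_two, ← hq, zero_mul, sub_zero] at hdet
    rw [← hq, mul_zero, zero_add]
    exact ht.lt_of_ne' (right_ne_zero_of_mul (hdet.trans_ne hunit))

theorem three_le_trace_continuantMatrix (hne : s ≠ []) (hs : ∀ a ∈ s, 0 < a)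
    (heven : Even s.length) : 3 ≤ (continuantMatrix s).trace := by
  have hp := continuantMatrix_zero_zero_pos hs
  have hqr := mul_pos (continuantMatrix_zero_one_pos hne hs) (continuantMatrix_one_zero_pos hne hs)
  have hdet := det_continuantMatrix s
  rw [det_fin_two, heven.neg_one_pow] at hdet
  have hpt : 2 ≤ continuantMatrix s 0 0 * continuantMatrix s 1 1 := by linarith
  have ht : 0 < continuantMatrix s 1 1 := pos_of_mul_pos_right (by linarith) hp.le
  rw [trace_fin_two]
  nlinarith [hp, hpt, ht]

theorem prependCF_eq_continuantMatrix_div (hs : ∀ a ∈ s, 0 < a) {x : ℝ} (hx : 0 < x) :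
    prependCF s x = (continuantMatrix s 0 0 * x + continuantMatrix s 0 1) /
      (continuantMatrix s 1 0 * x + continuantMatrix s 1 1) := by
  induction s with
  | nil => simp [continuantMatrix, prependCF]
  | cons a s ih =>
    rw [List.forall_mem_cons] at hs
    have hden : (0 : ℝ) < continuantMatrix s 0 0 * x + continuantMatrix s 0 1 :=
      add_pos_of_pos_of_nonneg
        (mul_pos (by exact_mod_cast continuantMatrix_zero_zero_pos hs.2) hx)
        (by exact_mod_cast continuantMatrix_nonneg hs.2 0 1)
    rw [prependCF_cons, ih hs.2, inv_div, add_div' _ _ _ hden.ne', continuantMatrix_cons]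
    congr 1
    simp only [of_apply, cons_val', cons_val_zero, cons_val_one, cons_val_fin_one, Int.cast_add,
      Int.cast_mul]
    ring

end continuantMatrix

/-- The form `r x² + (t - p) x y - q y²`, whose roots are the fixed points of the Möbius
transformation with matrix `!![p, q; r, t]`. -/
def fixedPointForm (A : Matrix (Fin 2) (Fin 2) ℤ) : ℤ × ℤ × ℤ := (A 1 0, -A 0 1, A 1 1 - A 0 0)

theorem formDisc_fixedPointForm (A : Matrix (Fin 2) (Fin 2) ℤ) :
    formDisc (fixedPointForm A) = A.trace ^ 2 - 4 * A.det := by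
  rw [trace_fin_two, det_fin_two, formDisc, fixedPointForm]
  ring

theorem not_isSquare_sq_sub_four {a : ℤ} (ha : 3 ≤ a) : ¬IsSquare (a ^ 2 - 4) := by
  rintro ⟨b, hb⟩
  have hlt : |b| < a := abs_lt_of_sq_lt_sq (by linarith) (by linarith)
  have hgt : a - 1 < |b| := lt_of_pow_lt_pow_left₀ 2 (abs_nonneg b) (by rw [sq_abs]; linarith)
  omega

theorem xiPlus_pos {f : ℤ × ℤ × ℤ} (hm : 0 < f.1) (hn : f.2.1 < 0) : 0 < xiPlus f := by
  have hdisc : |(f.2.2 : ℝ)| ^ 2 < (formDisc f : ℝ) := by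
    rw [sq_abs, formDisc]
    exact_mod_cast by linarith [mul_neg_of_pos_of_neg hm hn]
  have hk : (f.2.2 : ℝ) < √(formDisc f : ℝ) :=
    (le_abs_self _).trans_lt (Real.lt_sqrt_of_sq_lt hdisc)
  exact div_pos (by linarith) (by exact_mod_cast mul_pos two_pos hm)

theorem hasCFTail_xiPlus_fixedPointForm {s : List ℤ} (hne : s ≠ []) (hs : ∀ a ∈ s, 0 < a) :
    HasCFTail s (xiPlus (fixedPointForm (continuantMatrix s))) := by
  set A := continuantMatrix s
  set ξ := xiPlus (fixedPointForm A)
  have hr : 0 < A 1 0 := continuantMatrix_one_zero_pos hne hs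
  have hq : 0 < A 0 1 := continuantMatrix_zero_one_pos hne hs
  have hξ : 0 < ξ := xiPlus_pos hr (neg_neg_of_pos hq)
  have hdisc : 0 ≤ formDisc (fixedPointForm A) := by
    simp only [formDisc, fixedPointForm]
    linarith [mul_pos hq hr, sq_nonneg (A 1 1 - A 0 0)]
  have hroot : A 1 0 * ξ ^ 2 + (A 1 1 - A 0 0 : ℤ) * ξ + (-A 0 1 : ℤ) = 0 :=
    xiPlus_root hr.ne' hdisc
  have hden : (0 : ℝ) < A 1 0 * ξ + A 1 1 :=
    add_pos_of_pos_of_nonneg (mul_pos (by exact_mod_cast hr) hξ)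
      (by exact_mod_cast continuantMatrix_nonneg hs 1 1)
  refine hasCFTail_of_prependCF_eq hne hs hξ ?_
  rw [prependCF_eq_continuantMatrix_div hs hξ, div_eq_iff hden.ne']
  push_cast at hroot
  linear_combination -hroot

theorem exists_isPrimitiveForm_hasCFTail {s : List ℤ} (hne : s ≠ []) (hs : ∀ a ∈ s, 0 < a)
    (heven : Even s.length) :
    ∃ f, IsPrimitiveForm f ∧ Irrational √(formDisc f : ℝ) ∧ HasCFTail s (xiPlus f) := by
  have htrace := three_le_trace_continuantMatrix hne hs heven
  have htail := hasCFTail_xiPlus_fixedPointForm hne hs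
  have hne0 : fixedPointForm (continuantMatrix s) ≠ 0 := fun h ↦
    (continuantMatrix_one_zero_pos hne hs).ne' (congrArg Prod.fst h)
  have hdisc := formDisc_fixedPointForm (continuantMatrix s)
  rw [det_continuantMatrix, heven.neg_one_pow, mul_one] at hdisc
  obtain ⟨d, f, hd, hfprim, hdf⟩ := exists_primitive_smul_eq hne0
  rw [← hdf, formDisc_smul] at hdisc
  rw [← hdf, xiPlus_smul hd] at htail
  refine ⟨f, hfprim, irrational_sqrt_formDisc_iff.mpr ⟨?_, fun hsq ↦ ?_⟩, htail⟩
  · have hpos : 0 < d ^ 2 * formDisc f := by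
      rw [hdisc]
      nlinarith
    exact pos_of_mul_pos_right hpos (sq_nonneg d)
  · exact not_isSquare_sq_sub_four htrace (hdisc ▸ (IsSquare.sq d).mul hsq)

/-! ### Forms with a given period -/

theorem not_sLEquiv_antipF_of_even_length {s : List ℤ} (hs : IsPeriodWord s) (heven : Even s.length)
    {f : ℤ × ℤ × ℤ} (hf : Irrational √(formDisc f : ℝ))
    (htail : HasCFTail s (xiPlus f)) : ¬SLEquiv f (antipF f) := by
  intro h
  have hself := (tailEquiv_of_sLEquiv hf h).trans (tailEquiv_xiPlus_antipF hf)
  obtain ⟨N, P, hodd, hperiod⟩ := TailEquiv.exists_odd_period hself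
  have hdvd : s.length ∣ P := hs.length_dvd (htail.periodic_repeatWord hs.1 hperiod)
  exact Nat.not_even_iff_odd.mpr hodd (heven.trans_dvd hdvd)

/-- A period `s` of length `P` determines a unique primitive class iff `P` is odd. -/
theorem statement3 (s : List ℤ) (hs : IsPeriodWord s) :
    (Odd s.length →
      ∀ f g : ℤ × ℤ × ℤ, IsPrimitiveForm f → IsPrimitiveForm g →
        0 < formDisc f → ¬ IsSquare (formDisc f) →
        0 < formDisc g → ¬ IsSquare (formDisc g) →
        ∀ sf sg : List ℤ, IsCFPeriod sf (xiPlus f) → IsCFPeriod sg (xiPlus g) →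
          List.IsRotated sf s → List.IsRotated sg s → SLEquiv f g) ∧
    (Even s.length →
      ∃ f g : ℤ × ℤ × ℤ, IsPrimitiveForm f ∧ IsPrimitiveForm g ∧
        0 < formDisc f ∧ ¬ IsSquare (formDisc f) ∧
        0 < formDisc g ∧ ¬ IsSquare (formDisc g) ∧
        ¬ SLEquiv f g ∧
        (∃ sf : List ℤ, IsCFPeriod sf (xiPlus f) ∧ List.IsRotated sf s) ∧
        (∃ sg : List ℤ, IsCFPeriod sg (xiPlus g) ∧ List.IsRotated sg s)) := by
  constructor
  · intro hodd f g hfprim hgprim hf0 hfsq hg0 hgsq sf sg hsf hsg hsfs hsgs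
    rw [sLEquiv_iff_tailEquiv (irrational_sqrt_formDisc_iff.mpr ⟨hf0, hfsq⟩)
      (irrational_sqrt_formDisc_iff.mpr ⟨hg0, hgsq⟩) hfprim hgprim]
    exact (hsf.hasCFTail.of_isRotated hsfs).tailEquiv_zero_of_odd_length hodd
      (hsg.hasCFTail.of_isRotated hsgs)
  · intro heven
    obtain ⟨f, hfprim, hf, hftail⟩ := exists_isPrimitiveForm_hasCFTail hs.1 hs.2.1 heven
    have hgprim : IsPrimitiveForm (antipF f) := by rwa [isPrimitiveForm_iff, formContent_antipF]
    have hgtail := hftail.of_tailEquiv hs.1 (tailEquiv_xiPlus_antipF hf).symm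
    obtain ⟨hf0, hfsq⟩ := irrational_sqrt_formDisc_iff.mp hf
    refine ⟨f, antipF f, hfprim, hgprim, hf0, hfsq, ?_, ?_, ?_,
      ⟨s, hftail.isCFPeriod hs, .refl s⟩, ⟨s, hgtail.isCFPeriod hs, .refl s⟩⟩
    · rwa [formDisc_antipF]
    · rwa [formDisc_antipF]
    · exact not_sLEquiv_antipF_of_even_length hs heven hf hftail
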